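/- For every positive integer p there exists a constant c_p ≥ 1, depending only on p, with the following property. Let 𝒰, f, G, Ω, ρ and ℓ(𝒰) ≤ κ(𝒰) be as follows: 𝒰 is a doubling covering of the compact set G ⊆ Y ⊆ ℂ^N; f : Y → ℂ is such that f ∘ ψ̃_j is analytic and sectionally p-valent on B₄ for every chart; Ω ⊆ G is compact; 0 < ρ ≤ 1; every point z ∈ G is contained in the last chart of some chain of at most ℓ(𝒰) charts of 𝒰 whose first chart U_{j₁} satisfies ρ(U_{j₁}, Ω) ≥ ρ and whose consecutive intersection radii are at least ρ. Assume moreover that c_p/ρ^p > 1 and sup_Ω |f| > 0. Then κ(𝒰) ≥ log( sup_G |f| / sup_Ω |f| ) / log( c_p / ρ^p ). -/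

import Mathlib

open Metric Set

noncomputable section

/-- A doubling covering of `G` in `Y ⊆ ℂ^N`, with charts given by analytic injective maps
`ψ̃_j` defined on an open neighborhood of the closed ball `B̄₄ ⊆ ℂᵏ`, with images in `Y`,
such that the charts `U_j = ψ̃_j(B₁)` cover `G`. -/
structure DoublingCovering (k N : ℕ) (G Y : Set (EuclideanSpace ℂ (Fin N))) where
  /-- the number of charts `κ(𝒰)` -/
  kappa : ℕ
  /-- the chart maps -/
  psi : Fin kappa → EuclideanSpace ℂ (Fin k) → EuclideanSpace ℂ (Fin N)
  /-- the open neighborhoods of `B̄₄` on which the chart maps are analytic and injective -/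
  dom : Fin kappa → Set (EuclideanSpace ℂ (Fin k))
  dom_open : ∀ j, IsOpen (dom j)
  dom_superset : ∀ j, closedBall (0 : EuclideanSpace ℂ (Fin k)) 4 ⊆ dom j
  analytic : ∀ j, AnalyticOnNhd ℂ (psi j) (dom j)
  injOn : ∀ j, Set.InjOn (psi j) (dom j)
  mapsTo : ∀ j, Set.MapsTo (psi j) (dom j) Y
  covers : G ⊆ ⋃ j, psi j '' ball (0 : EuclideanSpace ℂ (Fin k)) 1

namespace DoublingCovering

variable {k N : ℕ} {G Y : Set (EuclideanSpace ℂ (Fin N))}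

/-- The chart `U_j = ψ̃_j(B₁)`. -/
def chart (U : DoublingCovering k N G Y) (j : Fin U.kappa) :
    Set (EuclideanSpace ℂ (Fin N)) :=
  U.psi j '' ball 0 1

/-- `ψ̃_j⁻¹(U_j ∩ S)` (the preimage taken inside `B₁`) contains a ball of radius `ρ`. -/
def RadGe (U : DoublingCovering k N G Y) (j : Fin U.kappa)
    (S : Set (EuclideanSpace ℂ (Fin N))) (ρ : ℝ) : Prop :=
  ∃ c : EuclideanSpace ℂ (Fin k),
    ball c ρ ⊆ {x ∈ ball (0 : EuclideanSpace ℂ (Fin k)) 1 | U.psi j x ∈ U.chart j ∩ S}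

/-- The intersection radius `ρ(U_i, U_j)` of two charts is at least `ρ`. -/
def InterGe (U : DoublingCovering k N G Y) (i j : Fin U.kappa) (ρ : ℝ) : Prop :=
  U.RadGe i (U.chart j) ρ ∧ U.RadGe j (U.chart i) ρ

/-- A chain of at most `L` pairwise distinct charts whose first chart satisfies
`ρ(U_{j₁}, Ω) ≥ ρ`, whose consecutive intersection radii are at least `ρ` (in particular
consecutive charts intersect), and whose last chart contains `z`. -/
def ChainFrom (U : DoublingCovering k N G Y) (Ω : Set (EuclideanSpace ℂ (Fin N)))
    (ρ : ℝ) (L : ℕ) (z : EuclideanSpace ℂ (Fin N)) : Prop :=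
  ∃ (l : ℕ) (hl : 0 < l) (js : Fin l → Fin U.kappa), l ≤ L ∧ Function.Injective js ∧
    U.RadGe (js ⟨0, hl⟩) Ω ρ ∧
    (∀ m : ℕ, (h : m + 1 < l) → U.InterGe (js ⟨m, by omega⟩) (js ⟨m + 1, h⟩) ρ) ∧
    z ∈ U.chart (js ⟨l - 1, by omega⟩)

end DoublingCovering

/-- `f` is sectionally `p`-valent in `W ⊆ ℂⁿ`: on every complex affine line
`L = {a + t·b : t ∈ ℂ}` (with `b ≠ 0`) and every `c ∈ ℂ`, the equation `f = c` has at most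
`p` solutions on `L ∩ W`. -/
def SectionallyPValentOn {n : ℕ} (f : EuclideanSpace ℂ (Fin n) → ℂ)
    (W : Set (EuclideanSpace ℂ (Fin n))) (p : ℕ) : Prop :=
  ∀ a b : EuclideanSpace ℂ (Fin n), b ≠ 0 → ∀ c : ℂ, ∀ s : Finset ℂ,
    (∀ t ∈ s, a + t • b ∈ W ∧ f (a + t • b) = c) → s.card ≤ p

/-!
Suppose that a `p`-valent function `g` takes values of modulus at most `a` and at least `b` on
every circle of an annulus `r < |z| < R`. The image of each circle then has logarithmic length at
least `log (b / a)` inside `a < |w| < b`, an annulus of logarithmic area `2 π log (b / a)` which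
`g` covers at most `p` times, so Cauchy–Schwarz gives `log (R / r) * log (b / a) ≤ 4 π ^ 2 p`.

If `|g| ≤ m` on a circle of radius `ρ`, subtracting a small regular value makes the zeros of `g`
simple, hence `g = P q` with `P` a monic polynomial of degree at most `p` and `q` zero-free. The
maximum principle bounds `P` below somewhere on the small circle, and the minimum principle carries
the resulting bound on `q` to every larger circle: on each of them `|g| ≤ (2 R / ρ) ^ p * m` at some
point. The length–area bound turns this into the doubling inequality on a disc, thus on a ball
through its complex lines, and every chart of a chain costs one factor `c_p / ρ ^ p`.
-/

/-- One-variable `p`-valence: `f` takes each value at most `p` times on `s`. As in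
`SectionallyPValentOn`, preimages are counted without multiplicity. -/
def PValentOn {α β : Type*} (f : α → β) (s : Set α) (p : ℕ) : Prop :=
  ∀ w, {x ∈ s | f x = w}.encard ≤ p

namespace PValentOn

variable {α β : Type*} {f : α → β} {s t : Set α} {p : ℕ}

lemma mono (hf : PValentOn f t p) (hst : s ⊆ t) : PValentOn f s p := fun w =>
  le_trans (encard_le_encard fun _ hx => And.imp_left (@hst _) hx) (hf w)

lemma sub_const [AddGroup β] (hf : PValentOn f s p) (c : β) :
    PValentOn (fun x => f x - c) s p := fun w => by
  simpa only [sub_eq_iff_eq_add] using hf (w + c)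

lemma exists_finset (hf : PValentOn f s p) (w : β) :
    ∃ Z : Finset α, Z.card ≤ p ∧ ∀ x, x ∈ Z ↔ x ∈ s ∧ f x = w := by
  have hfin := finite_of_encard_le_coe (hf w)
  refine ⟨hfin.toFinset, ?_, fun x => by simp⟩
  simpa only [hfin.encard_eq_coe_toFinset_card, Nat.cast_le] using hf w

open scoped ENNReal in
lemma tsum_indicator_image_le {ι : Type*} (hf : PValentOn f s p) {E : ι → Set α}
    (hEs : ∀ i, E i ⊆ s) (hE : Pairwise (Function.onFun Disjoint E)) (φ : β → ℝ≥0∞) (w : β) :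
    ∑' i, (f '' E i).indicator φ w ≤ p * φ w := by
  set I : Set ι := {i | w ∈ f '' E i}
  choose x hxE hxw using fun i : I => i.2
  have hx : Function.Injective fun i : I => (⟨x i, hEs i (hxE i), hxw i⟩ : {x ∈ s | f x = w}) :=
    fun i j hij => Subtype.ext <| hE.eq <| not_disjoint_iff.2
      ⟨x i, hxE i, Subtype.mk.inj hij ▸ hxE j⟩
  have hcard : I.encard ≤ p := (Function.Embedding.encard_le ⟨_, hx⟩).trans (hf w)
  calc ∑' i, (f '' E i).indicator φ w = ∑' _ : I, φ w := by
        rw [tsum_subtype I fun _ => φ w]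
        rfl
    _ = I.encard * φ w := ENNReal.tsum_set_const I (φ w)
    _ ≤ p * φ w := by gcongr; exact_mod_cast hcard

end PValentOn

section Area

open MeasureTheory
open scoped ENNReal NNReal

variable {E : Type*} [NormedAddCommGroup E] [NormedSpace ℝ E] [FiniteDimensional ℝ E]
  [MeasurableSpace E] [BorelSpace E]

lemma exists_measurable_partition_injOn {f : E → E} {f' : E → E →L[ℝ] E} {s : Set E}
    (hf' : ∀ x ∈ s, HasFDerivWithinAt f (f' x) s x) (hdet : ∀ x ∈ s, (f' x).det ≠ 0) :
    ∃ t : ℕ → Set E, Pairwise (Function.onFun Disjoint t) ∧ (∀ i, MeasurableSet (t i)) ∧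
      s ⊆ ⋃ i, t i ∧ ∀ i, InjOn f (s ∩ t i) := by
  classical
  rcases s.eq_empty_or_nonempty with rfl | hs
  · exact ⟨fun _ => ∅, fun _ _ _ => disjoint_bot_left, by simp, by simp, by simp⟩
  have hr (A : E →L[ℝ] E) : ∃ r : ℝ≥0, r ≠ 0 ∧ ∀ u, A.det ≠ 0 →
      ApproximatesLinearOn f A u r → InjOn f u := by
    by_cases hA : A.det = 0
    · exact ⟨1, one_ne_zero, fun _ h => (h hA).elim⟩
    set B := A.toContinuousLinearEquivOfDetNeZero hA
    rcases subsingleton_or_nontrivial E with hE | hE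
    · exact ⟨1, one_ne_zero, fun u _ _ => injOn_of_subsingleton f u⟩
    · have hB : 0 < ‖(B.symm : E →L[ℝ] E)‖₊⁻¹ := inv_pos.2 B.nnnorm_symm_pos
      exact ⟨_, (half_pos hB).ne', fun u _ hu =>
        ApproximatesLinearOn.injOn (f' := B) hu (.inr (half_lt_self hB))⟩
  choose r hr0 hr using hr
  obtain ⟨t, A, htd, htm, hst, hA, hAf'⟩ :=
    exists_partition_approximatesLinearOn_of_hasFDerivWithinAt f s f' hf' r hr0
  refine ⟨t, htd, htm, hst, fun i => ?_⟩
  obtain ⟨y, hy, hAy⟩ := hAf' hs i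
  exact hr (A i) _ (hAy ▸ hdet y hy) (hA i)

lemma PValentOn.lintegral_abs_det_fderiv_mul_le {f : E → E} {s : Set E} {p : ℕ}
    (hp : PValentOn f s p) (μ : Measure E) [μ.IsAddHaarMeasure] {f' : E → E →L[ℝ] E}
    (hs : MeasurableSet s) (hf' : ∀ x ∈ s, HasFDerivWithinAt f (f' x) s x)
    (hdet : ∀ x ∈ s, (f' x).det ≠ 0) {φ : E → ℝ≥0∞} (hφ : Measurable φ) :
    ∫⁻ x in s, .ofReal |(f' x).det| * φ (f x) ∂μ ≤ p * ∫⁻ y, φ y ∂μ := by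
  obtain ⟨t, htd, htm, hst, hinj⟩ := exists_measurable_partition_injOn hf' hdet
  have hmeas (i : ℕ) : MeasurableSet (s ∩ t i) := hs.inter (htm i)
  have hdisj : Pairwise (Function.onFun Disjoint fun i => s ∩ t i) := fun i j hij =>
    (htd hij).mono inter_subset_right inter_subset_right
  have hderiv (i : ℕ) : ∀ x ∈ s ∩ t i, HasFDerivWithinAt f (f' x) (s ∩ t i) x := fun x hx =>
    (hf' x hx.1).mono inter_subset_left
  have himage (i : ℕ) : MeasurableSet (f '' (s ∩ t i)) :=
    measurable_image_of_fderivWithin (hmeas i) (hderiv i) (hinj i)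
  calc ∫⁻ x in s, .ofReal |(f' x).det| * φ (f x) ∂μ
      = ∑' i, ∫⁻ x in s ∩ t i, .ofReal |(f' x).det| * φ (f x) ∂μ := by
        rw [← lintegral_iUnion hmeas hdisj, ← inter_iUnion, inter_eq_left.2 hst]
    _ = ∑' i, ∫⁻ y, (f '' (s ∩ t i)).indicator φ y ∂μ := by
        congr 1 with i
        rw [lintegral_indicator (himage i),
          lintegral_image_eq_lintegral_abs_det_fderiv_mul μ (hmeas i) (hderiv i) (hinj i)]
    _ = ∫⁻ y, ∑' i, (f '' (s ∩ t i)).indicator φ y ∂μ :=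
        (lintegral_tsum fun i => (hφ.indicator (himage i)).aemeasurable).symm
    _ ≤ ∫⁻ y, p * φ y ∂μ :=
        lintegral_mono (hp.tsum_indicator_image_le (fun _ => inter_subset_left) hdisj φ)
    _ = p * ∫⁻ y, φ y ∂μ := lintegral_const_mul _ hφ

lemma abs_det_restrictScalars_toSpanSingleton (z : ℂ) :
    |((ContinuousLinearMap.toSpanSingleton ℂ z).restrictScalars ℝ).det| = ‖z‖ ^ 2 := by
  simp [ContinuousLinearMap.det, LinearMap.det_restrictScalars, Algebra.norm_complex_apply,
    Complex.normSq_eq_norm_sq]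

lemma PValentOn.lintegral_enorm_deriv_sq_mul_le {g : ℂ → ℂ} {D : Set ℂ} {p : ℕ}
    (hp : PValentOn g D p) (hD : IsOpen D) (hg : DifferentiableOn ℂ g D)
    {φ : ℂ → ℝ≥0∞} (hφ : Measurable φ) :
    ∫⁻ z in D, ‖deriv g z‖ₑ ^ 2 * φ (g z) ≤ p * ∫⁻ w, φ w := by
  set C : Set ℂ := {z | deriv g z ≠ 0}
  have hC : MeasurableSet C := measurable_deriv g (measurableSet_singleton 0).compl
  have hCD : MeasurableSet (C ∩ D) := hC.inter hD.measurableSet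
  set L : ℂ → ℂ →L[ℝ] ℂ := fun z =>
    (ContinuousLinearMap.toSpanSingleton ℂ (deriv g z)).restrictScalars ℝ
  have hderiv : ∀ z ∈ C ∩ D, HasFDerivWithinAt g (L z) (C ∩ D) z := fun z hz =>
    ((hg.differentiableAt (hD.mem_nhds hz.2)).hasDerivAt.hasFDerivAt.restrictScalars
      ℝ).hasFDerivWithinAt
  have hdet (z : ℂ) : |(L z).det| = ‖deriv g z‖ ^ 2 :=
    abs_det_restrictScalars_toSpanSingleton _
  calc ∫⁻ z in D, ‖deriv g z‖ₑ ^ 2 * φ (g z)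
      = ∫⁻ z in C ∩ D, ‖deriv g z‖ₑ ^ 2 * φ (g z) := by
        rw [← setLIntegral_indicator hC]
        congr 1 with z
        by_cases hz : deriv g z = 0 <;> simp [C, hz]
    _ = ∫⁻ z in C ∩ D, .ofReal |(L z).det| * φ (g z) := by
        simp only [hdet, ENNReal.ofReal_pow (norm_nonneg _), ofReal_norm]
    _ ≤ p * ∫⁻ w, φ w :=
        (hp.mono inter_subset_right).lintegral_abs_det_fderiv_mul_le volume hCD hderiv
          (fun z hz => abs_ne_zero.1 (hdet z ▸ pow_ne_zero 2 (norm_ne_zero_iff.2 hz.1))) hφ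

end Area

section LengthArea

open MeasureTheory Real
open scoped ENNReal

lemma volume_image_le_lintegral_enorm_deriv {f : ℝ → ℝ} {s : Set ℝ} (hs : MeasurableSet s)
    (hf : ∀ x ∈ s, DifferentiableAt ℝ f x) : volume (f '' s) ≤ ∫⁻ x in s, ‖deriv f x‖ₑ := by
  refine (addHaar_image_le_lintegral_abs_det_fderiv volume hs fun x hx =>
    (hf x hx).hasFDerivAt.hasFDerivWithinAt).trans_eq (lintegral_congr fun x => ?_)
  simp [← toSpanSingleton_deriv, ← Real.enorm_eq_ofReal_abs]

lemma sq_lintegral_le_measure_univ_mul {α : Type*} [MeasurableSpace α] (μ : Measure α)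
    {F : α → ℝ≥0∞} (hF : AEMeasurable F μ) :
    (∫⁻ x, F x ∂μ) ^ 2 ≤ μ univ * ∫⁻ x, F x ^ 2 ∂μ := by
  have h := ENNReal.lintegral_mul_le_Lp_mul_Lq μ Real.HolderConjugate.two_two
    (aemeasurable_const (b := 1)) hF
  simp only [Pi.mul_apply, one_mul, ENNReal.one_rpow, lintegral_one] at h
  have hsq (x : ℝ≥0∞) : (x ^ (1 / 2 : ℝ)) ^ 2 = x := by
    rw [← ENNReal.rpow_natCast, ← ENNReal.rpow_mul]
    norm_num
  simpa only [mul_pow, hsq, ENNReal.rpow_ofNat] using pow_le_pow_left' h 2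

section LogDensity

variable {E : Type*} [NormedAddCommGroup E]

/-- The density `|dw| / |w|` of logarithmic length, restricted to the annulus `a < ‖w‖ < b`. -/
def logDensity (a b : ℝ) : E → ℝ≥0∞ :=
  (norm ⁻¹' Ioo a b).indicator fun w => ‖w‖ₑ⁻¹

lemma measurable_logDensity [MeasurableSpace E] [OpensMeasurableSpace E] (a b : ℝ) :
    Measurable (logDensity a b : E → ℝ≥0∞) :=
  (measurable_enorm.inv).indicator (measurable_norm measurableSet_Ioo)

variable [InnerProductSpace ℝ E] {γ : ℝ → E}

lemma norm_deriv_log_norm_le {t : ℝ} (hγ : DifferentiableAt ℝ γ t) (h0 : γ t ≠ 0) :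
    ‖deriv (fun s => log ‖γ s‖) t‖ ≤ ‖deriv γ t‖ / ‖γ t‖ := by
  have hnorm : HasDerivAt (fun s => ‖γ s‖) (fderiv ℝ norm (γ t) (deriv γ t)) t :=
    ((contDiffAt_norm ℝ h0 (n := 1)).differentiableAt
      one_ne_zero).hasFDerivAt.comp_hasDerivAt t hγ.hasDerivAt
  rw [(hnorm.log (norm_ne_zero_iff.2 h0)).deriv, norm_div, norm_norm]
  gcongr
  simpa using (fderiv ℝ norm (γ t)).le_of_opNorm_le
    (norm_fderiv_le_of_lipschitz ℝ lipschitzWith_one_norm) (deriv γ t)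

variable {a b x y : ℝ} {J : Set ℝ}

lemma ofReal_log_div_le_lintegral_logDensity (hγ : Differentiable ℝ γ) (hJ : J.OrdConnected)
    (ha : 0 < a) (hb : 0 < b) (hx : x ∈ J) (hy : y ∈ J) (hxa : ‖γ x‖ ≤ a) (hyb : b ≤ ‖γ y‖) :
    .ofReal (log (b / a)) ≤ ∫⁻ t in J, ‖deriv γ t‖ₑ * logDensity a b (γ t) := by
  set S : Set ℝ := {t | ‖γ t‖ ∈ Ioo a b}
  have hS : MeasurableSet S := (isOpen_Ioo.preimage hγ.continuous.norm).measurableSet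
  have hγ0 : ∀ t ∈ S, γ t ≠ 0 := fun t ht => norm_pos_iff.1 (ha.trans ht.1)
  have hcross : Ioo (log a) (log b) ⊆ (fun t => log ‖γ t‖) '' (S ∩ J) := by
    intro u hu
    have hau : a < exp u := (log_lt_iff_lt_exp ha).1 hu.1
    have hub : exp u < b := (lt_log_iff_exp_lt hb).1 hu.2
    obtain ⟨t, htJ, htu⟩ : exp u ∈ (fun t => ‖γ t‖) '' J :=
      hJ.isPreconnected.intermediate_value hx hy hγ.continuous.norm.continuousOn
        ⟨hxa.trans hau.le, hub.le.trans hyb⟩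
    exact ⟨t, ⟨by simp_all [S], htJ⟩, by simp only [htu, log_exp]⟩
  calc .ofReal (log (b / a)) = volume (Ioo (log a) (log b)) := by
        rw [Real.volume_Ioo, log_div hb.ne' ha.ne']
    _ ≤ volume ((fun t => log ‖γ t‖) '' (S ∩ J)) := measure_mono hcross
    _ ≤ ∫⁻ t in S ∩ J, ‖deriv (fun s => log ‖γ s‖) t‖ₑ :=
        volume_image_le_lintegral_enorm_deriv (hS.inter hJ.measurableSet) fun t ht =>
          ((hγ t).norm ℝ (hγ0 t ht.1)).log (norm_ne_zero_iff.2 (hγ0 t ht.1))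
    _ ≤ ∫⁻ t in S ∩ J, ‖deriv γ t‖ₑ * ‖γ t‖ₑ⁻¹ := by
        refine setLIntegral_mono' (hS.inter hJ.measurableSet) fun t ht => ?_
        have hpos : 0 < ‖γ t‖ := norm_pos_iff.2 (hγ0 t ht.1)
        rw [← ofReal_norm, ← ofReal_norm, ← ofReal_norm, ← ENNReal.ofReal_inv_of_pos hpos,
          ← ENNReal.ofReal_mul (norm_nonneg _), ← div_eq_mul_inv]
        exact ENNReal.ofReal_le_ofReal (norm_deriv_log_norm_le (hγ t) (hγ0 t ht.1))
    _ = ∫⁻ t in J, ‖deriv γ t‖ₑ * logDensity a b (γ t) := by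
        rw [← setLIntegral_indicator hS]
        congr 1 with t
        by_cases ht : ‖γ t‖ ∈ Ioo a b <;> simp only [logDensity, indicator, S, mem_ofPred_eq,
          mem_preimage, ht, if_true, if_false, mul_zero]

lemma sq_ofReal_log_div_le_lintegral_logDensity [MeasurableSpace E] [BorelSpace E]
    [CompleteSpace E] (hγ : Differentiable ℝ γ) (hJ : J.OrdConnected) (ha : 0 < a) (hb : 0 < b)
    (hx : x ∈ J) (hy : y ∈ J) (hxa : ‖γ x‖ ≤ a) (hyb : b ≤ ‖γ y‖) :
    .ofReal (log (b / a)) ^ 2 ≤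
      volume J * ∫⁻ t in J, (‖deriv γ t‖ₑ * logDensity a b (γ t)) ^ 2 := by
  have hmeas : Measurable fun t => ‖deriv γ t‖ₑ * logDensity a b (γ t) :=
    (measurable_deriv γ).enorm.mul ((measurable_logDensity a b).comp hγ.continuous.measurable)
  rw [← Measure.restrict_apply_univ J]
  exact (pow_le_pow_left' (ofReal_log_div_le_lintegral_logDensity hγ hJ ha hb hx hy hxa hyb)
    2).trans (sq_lintegral_le_measure_univ_mul _ hmeas.aemeasurable)

end LogDensity

lemma lintegral_norm_preimage_eq_lintegral_circleMap {A : Set ℝ} (hA : MeasurableSet A)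
    (hA0 : A ⊆ Ioi 0) {F : ℂ → ℝ≥0∞} (hF : Measurable ((norm ⁻¹' A).indicator F)) :
    ∫⁻ z in norm ⁻¹' A, F z =
      ∫⁻ s in A, .ofReal s * ∫⁻ θ in Ioc (-π) π, F (circleMap 0 s θ) := by
  have hsymm (q : ℝ × ℝ) : Complex.polarCoord.symm q = circleMap 0 q.1 q.2 := by
    simp [Complex.polarCoord_symm_apply, circleMap_zero, Complex.exp_mul_I]
  have hmeas : Measurable fun q : ℝ × ℝ => circleMap 0 q.1 q.2 := by
    simp only [circleMap_zero]
    fun_prop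
  rw [← lintegral_indicator (measurable_norm hA), ← Complex.lintegral_comp_polarCoord_symm,
    polarCoord_target, Measure.volume_eq_prod, ← Measure.prod_restrict, lintegral_prod]
  · simp only [hsymm, smul_eq_mul, restrict_Ioo_eq_restrict_Ioc]
    conv_rhs => rw [← inter_eq_left.2 hA0, ← setLIntegral_indicator hA]
    refine setLIntegral_congr_fun measurableSet_Ioi fun s (hs : 0 < s) => ?_
    have hnorm (θ : ℝ) : ‖circleMap 0 s θ‖ = s := by rw [norm_circleMap_zero, abs_of_pos hs]
    by_cases hsA : s ∈ A <;> simp only [indicator, mem_preimage, hnorm, hsA, if_true, if_false,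
      mul_zero, lintegral_zero, lintegral_const_mul' _ _ ENNReal.ofReal_ne_top]
  · simp only [hsymm]
    exact (measurable_fst.ennreal_ofReal.smul (hF.comp hmeas)).aemeasurable

lemma lintegral_ofReal_inv_Ioo {a b : ℝ} (ha : 0 < a) (hab : a ≤ b) :
    ∫⁻ s in Ioo a b, .ofReal s⁻¹ = .ofReal (log (b / a)) := by
  have hint : IntegrableOn (fun s : ℝ => s⁻¹) (Icc a b) :=
    (continuousOn_inv₀.mono fun s hs => (ha.trans_le hs.1).ne').integrableOn_Icc
  rw [← integral_inv_of_pos ha (ha.trans_le hab), intervalIntegral.integral_of_le hab,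
    integral_Ioc_eq_integral_Ioo,
    ofReal_integral_eq_lintegral_ofReal (hint.mono_set Ioo_subset_Icc_self)]
  filter_upwards [self_mem_ae_restrict measurableSet_Ioo] with s hs
  exact inv_nonneg.2 (ha.le.trans hs.1.le)

lemma lintegral_logDensity_sq {a b : ℝ} (ha : 0 < a) (hab : a ≤ b) :
    ∫⁻ w : ℂ, logDensity a b w ^ 2 = .ofReal (2 * π * log (b / a)) := by
  have hmeas : Measurable ((norm ⁻¹' Ioo a b).indicator fun w : ℂ => (‖w‖ₑ⁻¹) ^ 2) :=
    ((measurable_enorm.inv).pow_const 2).indicator (measurable_norm measurableSet_Ioo)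
  calc ∫⁻ w : ℂ, logDensity a b w ^ 2 = ∫⁻ w : ℂ in norm ⁻¹' Ioo a b, (‖w‖ₑ⁻¹) ^ 2 := by
        rw [← lintegral_indicator (measurable_norm measurableSet_Ioo)]
        congr 1 with w
        by_cases hw : w ∈ norm ⁻¹' Ioo a b <;> simp [logDensity, hw]
    _ = ∫⁻ s in Ioo a b, .ofReal s * ∫⁻ θ in Ioc (-π) π, (‖circleMap 0 s θ‖ₑ⁻¹) ^ 2 :=
        lintegral_norm_preimage_eq_lintegral_circleMap measurableSet_Ioo
          (fun s hs => ha.trans hs.1) hmeas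
    _ = ∫⁻ s in Ioo a b, .ofReal (2 * π) * .ofReal s⁻¹ := by
        refine setLIntegral_congr_fun measurableSet_Ioo fun s hs => ?_
        have hs0 : 0 < s := ha.trans hs.1
        have hnorm (θ : ℝ) : ‖circleMap 0 s θ‖ₑ⁻¹ = .ofReal s⁻¹ := by
          rw [← ofReal_norm, norm_circleMap_zero, abs_of_pos hs0, ENNReal.ofReal_inv_of_pos hs0]
        simp only [hnorm, setLIntegral_const, Real.volume_Ioc]
        rw [← ENNReal.ofReal_pow (by positivity), ← ENNReal.ofReal_mul (by positivity),
          ← ENNReal.ofReal_mul hs0.le, ← ENNReal.ofReal_mul (by positivity)]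
        congr 1
        field_simp
        ring
    _ = .ofReal (2 * π * log (b / a)) := by
        rw [lintegral_const_mul' _ _ ENNReal.ofReal_ne_top, lintegral_ofReal_inv_Ioo ha hab,
          ← ENNReal.ofReal_mul (by positivity)]

variable {g : ℂ → ℂ} {a b r R : ℝ}

lemma sq_ofReal_log_div_mul_le_lintegral_circleMap {D : Set ℂ} (hD : IsOpen D)
    (hg : DifferentiableOn ℂ g D) {s : ℝ} (hs : 0 < s) (hsD : sphere 0 s ⊆ D)
    (ha : 0 < a) (hb : 0 < b) (hx : ∃ x ∈ sphere 0 s, ‖g x‖ ≤ a)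
    (hy : ∃ y ∈ sphere 0 s, b ≤ ‖g y‖) :
    .ofReal (log (b / a)) ^ 2 * .ofReal s⁻¹ ≤ .ofReal (2 * π) * (.ofReal s *
      ∫⁻ θ in Ioc (-π) π,
        ‖deriv g (circleMap 0 s θ)‖ₑ ^ 2 * logDensity a b (g (circleMap 0 s θ)) ^ 2) := by
  set γ : ℝ → ℂ := g ∘ circleMap 0 s with hγ_def
  have hderiv (θ : ℝ) :
      HasDerivAt γ (deriv g (circleMap 0 s θ) * (circleMap 0 s θ * Complex.I)) θ :=
    (hg.differentiableAt (hD.mem_nhds (hsD (circleMap_mem_sphere 0 hs.le θ)))).hasDerivAt.comp θ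
      (hasDerivAt_circleMap 0 s θ)
  have hγ : Differentiable ℝ γ := fun θ => (hderiv θ).differentiableAt
  have hspeed (θ : ℝ) : ‖deriv γ θ‖ₑ = .ofReal s * ‖deriv g (circleMap 0 s θ)‖ₑ := by
    rw [(hderiv θ).deriv, enorm_mul, enorm_mul, ← ofReal_norm (circleMap 0 s θ),
      norm_circleMap_zero, abs_of_pos hs, ← ofReal_norm Complex.I, Complex.norm_I,
      ENNReal.ofReal_one, mul_one, mul_comm]
  have hγ_arg {z : ℂ} (hz : z ∈ sphere 0 s) : γ z.arg = g z := by
    rw [hγ_def, Function.comp_apply, circleMap_zero, ← mem_sphere_zero_iff_norm.1 hz,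
      Complex.norm_mul_exp_arg_mul_I]
  obtain ⟨x, hxs, hxa⟩ := hx
  obtain ⟨y, hys, hyb⟩ := hy
  calc .ofReal (log (b / a)) ^ 2 * .ofReal s⁻¹
      ≤ .ofReal (2 * π) * (∫⁻ θ in Ioc (-π) π, (‖deriv γ θ‖ₑ * logDensity a b (γ θ)) ^ 2) *
          .ofReal s⁻¹ := by
        gcongr
        have hvol : volume (Ioc (-π) π) = .ofReal (2 * π) := by
          rw [Real.volume_Ioc, sub_neg_eq_add, ← two_mul]
        exact hvol ▸ sq_ofReal_log_div_le_lintegral_logDensity hγ ordConnected_Ioc ha hb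
          x.arg_mem_Ioc y.arg_mem_Ioc (hγ_arg hxs ▸ hxa) (hγ_arg hys ▸ hyb)
    _ = _ := by
        have hcancel : ENNReal.ofReal s ^ 2 * .ofReal s⁻¹ = .ofReal s := by
          rw [← ENNReal.ofReal_pow hs.le, ← ENNReal.ofReal_mul (by positivity), pow_two,
            mul_inv_cancel_right₀ hs.ne']
        simp only [hspeed, mul_pow, mul_assoc]
        rw [lintegral_const_mul' _ _ (ENNReal.pow_ne_top ENNReal.ofReal_ne_top),
          mul_right_comm, hcancel]
        rfl

lemma measurable_indicator_enorm_deriv_sq_mul_comp {D : Set ℂ} (hD : MeasurableSet D)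
    (hg : ContinuousOn g D) {φ : ℂ → ℝ≥0∞} (hφ : Measurable φ) :
    Measurable (D.indicator fun z => ‖deriv g z‖ₑ ^ 2 * φ (g z)) := by
  classical
  have hpw : Measurable (D.piecewise g 0) := hg.measurable_piecewise continuousOn_const hD
  convert (((measurable_deriv g).enorm.pow_const 2).mul (hφ.comp hpw)).indicator hD using 1
  ext z
  by_cases hz : z ∈ D <;> simp [hz]

theorem PValentOn.log_div_mul_log_div_le {p : ℕ} (hp : PValentOn g (norm ⁻¹' Ioo r R) p)
    (hg : DifferentiableOn ℂ g (norm ⁻¹' Ioo r R)) (hr : 0 < r) (hrR : r ≤ R)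
    (ha : 0 < a) (hab : a < b) (hx : ∀ s ∈ Ioo r R, ∃ x ∈ sphere 0 s, ‖g x‖ ≤ a)
    (hy : ∀ s ∈ Ioo r R, ∃ y ∈ sphere 0 s, b ≤ ‖g y‖) :
    log (R / r) * log (b / a) ≤ 4 * π ^ 2 * p := by
  set D : Set ℂ := norm ⁻¹' Ioo r R
  have hD : IsOpen D := isOpen_Ioo.preimage continuous_norm
  have hφ : Measurable fun w : ℂ => logDensity a b w ^ 2 := (measurable_logDensity a b).pow_const 2
  have hmeas := measurable_indicator_enorm_deriv_sq_mul_comp hD.measurableSet hg.continuousOn hφ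
  have hT : 0 < log (b / a) := log_pos ((one_lt_div ha).2 hab)
  have hlength_area : ENNReal.ofReal (log (b / a) ^ 2 * log (R / r)) ≤
      .ofReal (2 * π * (p * (2 * π * log (b / a)))) := by
    calc ENNReal.ofReal (log (b / a) ^ 2 * log (R / r))
        = ∫⁻ s in Ioo r R, .ofReal (log (b / a)) ^ 2 * .ofReal s⁻¹ := by
          rw [ENNReal.ofReal_mul (by positivity), ← lintegral_ofReal_inv_Ioo hr hrR,
            ENNReal.ofReal_pow hT.le,
            lintegral_const_mul' _ _ (ENNReal.pow_ne_top ENNReal.ofReal_ne_top)]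
      _ ≤ ∫⁻ s in Ioo r R, .ofReal (2 * π) * (.ofReal s * ∫⁻ θ in Ioc (-π) π,
            ‖deriv g (circleMap 0 s θ)‖ₑ ^ 2 * logDensity a b (g (circleMap 0 s θ)) ^ 2) :=
          setLIntegral_mono' measurableSet_Ioo fun s hs =>
            sq_ofReal_log_div_mul_le_lintegral_circleMap hD hg (hr.trans hs.1)
              (fun z hz => by rwa [mem_preimage, mem_sphere_zero_iff_norm.1 hz]) ha
              (ha.trans hab) (hx s hs) (hy s hs)
      _ = .ofReal (2 * π) * ∫⁻ z in D, ‖deriv g z‖ₑ ^ 2 * logDensity a b (g z) ^ 2 := by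
          rw [lintegral_const_mul' _ _ ENNReal.ofReal_ne_top,
            lintegral_norm_preimage_eq_lintegral_circleMap measurableSet_Ioo
              (fun s hs => hr.trans hs.1) hmeas]
      _ ≤ .ofReal (2 * π) * (p * ∫⁻ w : ℂ, logDensity a b w ^ 2) := by
          gcongr
          exact hp.lintegral_enorm_deriv_sq_mul_le hD hg hφ
      _ = .ofReal (2 * π * (p * (2 * π * log (b / a)))) := by
          rw [lintegral_logDensity_sq ha hab.le, ← ENNReal.ofReal_natCast,
            ← ENNReal.ofReal_mul p.cast_nonneg, ← ENNReal.ofReal_mul (by positivity)]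
  rw [ENNReal.ofReal_le_ofReal_iff (by positivity)] at hlength_area
  refine le_of_mul_le_mul_left ?_ hT
  linarith

end LengthArea

section Disc

open Real

section MaximumModulus

variable {F : Type*} [NormedAddCommGroup F] [NormedSpace ℂ F] {c t : ℂ} {s : ℝ}

lemma exists_mem_sphere_norm_le_norm {q : ℂ → F} (hs : 0 < s) (hq : DiffContOnCl ℂ q (ball c s))
    (ht : t ∈ closedBall c s) : ∃ x ∈ sphere c s, ‖q t‖ ≤ ‖q x‖ := by
  obtain ⟨x, hx, hmax⟩ := Complex.exists_mem_frontier_isMaxOn_norm isBounded_ball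
    (nonempty_ball.2 hs) hq
  exact ⟨x, frontier_ball c hs.ne' ▸ hx, hmax (closure_ball c hs.ne' ▸ ht)⟩

lemma exists_mem_sphere_norm_le_norm_of_ne_zero {q : ℂ → ℂ} (hs : 0 < s)
    (hq : DiffContOnCl ℂ q (ball c s)) (hq0 : ∀ x ∈ closedBall c s, q x ≠ 0)
    (ht : t ∈ closedBall c s) : ∃ x ∈ sphere c s, ‖q x‖ ≤ ‖q t‖ := by
  obtain ⟨x, hx, hle⟩ := exists_mem_sphere_norm_le_norm hs
    (hq.inv fun z hz => hq0 z (closure_ball c hs.ne' ▸ hz)) ht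
  refine ⟨x, hx, ?_⟩
  simpa only [Pi.inv_apply, norm_inv, inv_le_inv₀ (norm_pos_iff.2 (hq0 t ht))
    (norm_pos_iff.2 (hq0 x (sphere_subset_closedBall hx)))] using hle

-- The maximum principle is applied to `∏ (1 - u * w i)`, which is `1` at `u = 0`.
lemma exists_mem_sphere_pow_card_le_norm_prod_sub {ι : Type*} (I : Finset ι) (w : ι → ℂ) {r : ℝ}
    (hr : 0 < r) : ∃ z ∈ sphere (0 : ℂ) r, r ^ I.card ≤ ‖∏ i ∈ I, (z - w i)‖ := by
  have hdiff : Differentiable ℂ fun u : ℂ => ∏ i ∈ I, (1 - u * w i) := by fun_prop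
  obtain ⟨u, hu, hle⟩ := exists_mem_sphere_norm_le_norm (inv_pos.2 hr) hdiff.diffContOnCl
    (mem_closedBall_self (inv_pos.2 hr).le)
  rw [mem_sphere_zero_iff_norm] at hu
  have hu0 : u ≠ 0 := norm_pos_iff.1 (hu ▸ inv_pos.2 hr)
  have hprod : ∏ i ∈ I, (u⁻¹ - w i) = u⁻¹ ^ I.card * ∏ i ∈ I, (1 - u * w i) := by
    rw [← Finset.prod_const, ← Finset.prod_mul_distrib]
    refine Finset.prod_congr rfl fun i _ => ?_
    field_simp
  refine ⟨u⁻¹, by simp [hu], ?_⟩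
  rw [hprod, norm_mul, norm_pow, norm_inv, hu, inv_inv]
  refine le_mul_of_one_le_right (by positivity) ?_
  simpa using hle

end MaximumModulus

lemma norm_prod_sub_le {Z : Finset ℂ} {R : ℝ} (hZ : ∀ z ∈ Z, z ∈ closedBall 0 R) {x : ℂ}
    (hx : x ∈ closedBall 0 R) : ‖∏ z ∈ Z, (x - z)‖ ≤ (2 * R) ^ Z.card := by
  rw [norm_prod]
  refine (Finset.prod_le_prod (fun _ _ => norm_nonneg _) fun z hz => ?_).trans_eq
    (Finset.prod_const _)
  linarith [norm_sub_le x z, mem_closedBall_zero_iff.1 hx, mem_closedBall_zero_iff.1 (hZ z hz)]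

variable {D : Set ℂ} {g : ℂ → ℂ}

lemma exists_norm_lt_forall_deriv_ne_zero (hD : IsOpen D) (hg : DifferentiableOn ℂ g D)
    {ε : ℝ} (hε : 0 < ε) : ∃ w : ℂ, ‖w‖ < ε ∧ ∀ z ∈ D, g z = w → deriv g z ≠ 0 := by
  have hderiv (z : ℂ) (hz : z ∈ D) : HasFDerivAt g
      ((ContinuousLinearMap.toSpanSingleton ℂ (deriv g z)).restrictScalars ℝ) z :=
    (hg.differentiableAt (hD.mem_nhds hz)).hasDerivAt.hasFDerivAt.restrictScalars ℝ
  have hnull : MeasureTheory.volume (g '' {z ∈ D | deriv g z = 0}) = 0 :=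
    MeasureTheory.addHaar_image_eq_zero_of_det_fderivWithin_eq_zero _
      (fun z hz => (hderiv z hz.1).hasFDerivWithinAt) fun z hz => abs_eq_zero.1 <| by
        rw [abs_det_restrictScalars_toSpanSingleton, hz.2, norm_zero, zero_pow two_ne_zero]
  by_contra! hcrit
  have hsub : ball (0 : ℂ) ε ⊆ g '' {z ∈ D | deriv g z = 0} := fun w hw =>
    let ⟨z, hz, hzw, hz'⟩ := hcrit w (mem_ball_zero_iff.1 hw)
    ⟨z, ⟨hz, hz'⟩, hzw⟩
  exact (measure_ball_pos _ 0 hε).ne' (MeasureTheory.measure_mono_null hsub hnull)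

lemma exists_eq_prod_sub_mul (hD : IsOpen D) (hg : DifferentiableOn ℂ g D) (Z : Finset ℂ)
    (hZ : ∀ z ∈ Z, z ∈ D ∧ g z = 0) :
    ∃ q : ℂ → ℂ, DifferentiableOn ℂ q D ∧ ∀ t, g t = (∏ z ∈ Z, (t - z)) * q t := by
  classical
  induction Z using Finset.induction_on generalizing g with
  | empty => exact ⟨g, hg, by simp⟩
  | insert a Z ha ih =>
    obtain ⟨haD, hga⟩ := hZ a (Finset.mem_insert_self a Z)
    have hslope (t : ℂ) : (t - a) * dslope g a t = g t := by
      simpa [hga] using sub_smul_dslope g a t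
    have hZ' : ∀ z ∈ Z, z ∈ D ∧ dslope g a z = 0 := fun z hz => by
      obtain ⟨hzD, hgz⟩ := hZ z (Finset.mem_insert_of_mem hz)
      exact ⟨hzD, (mul_eq_zero.1 ((hslope z).trans hgz)).resolve_left
        (sub_ne_zero.2 (ne_of_mem_of_not_mem hz ha))⟩
    obtain ⟨q, hq, hgq⟩ := ih ((Complex.differentiableOn_dslope (hD.mem_nhds haD)).2 hg) hZ'
    exact ⟨q, hq, fun t => by rw [Finset.prod_insert ha, mul_assoc, ← hgq, hslope]⟩

lemma exists_eq_prod_sub_mul_of_simple_zeros (hD : IsOpen D) (hg : DifferentiableOn ℂ g D)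
    (hsimple : ∀ z ∈ D, g z = 0 → deriv g z ≠ 0) {Z : Finset ℂ}
    (hZ : ∀ z, z ∈ Z ↔ z ∈ D ∧ g z = 0) :
    ∃ q : ℂ → ℂ, DifferentiableOn ℂ q D ∧ (∀ z ∈ D, q z ≠ 0) ∧
      ∀ t, g t = (∏ z ∈ Z, (t - z)) * q t := by
  obtain ⟨q, hq, hgq⟩ := exists_eq_prod_sub_mul hD hg Z fun z => (hZ z).1
  refine ⟨q, hq, fun z hz hqz => ?_, hgq⟩
  have hgz : g z = 0 := by rw [hgq, hqz, mul_zero]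
  have hprod : ∏ w ∈ Z, (z - w) = 0 := Finset.prod_eq_zero ((hZ z).2 ⟨hz, hgz⟩) (sub_self z)
  have hprod_diff : DifferentiableAt ℂ (fun t => ∏ w ∈ Z, (t - w)) z := by fun_prop
  have hderiv := hprod_diff.hasDerivAt.mul (hq.differentiableAt (hD.mem_nhds hz)).hasDerivAt
  refine hsimple z hz hgz ?_
  rw [show g = (fun t => ∏ w ∈ Z, (t - w)) * q from funext hgq, hderiv.deriv, hqz, hprod]
  ring

variable {p : ℕ} {ρ r R m : ℝ}

/-- The factor by which a `p`-valent function on the disc of radius `R` can grow between the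
concentric discs of radii `ρ ≤ r < R`. The exponential comes from the length–area bound on the
annulus `r < |z| < R`, the power from a polynomial with at most `p` zeros. -/
def growthFactor (p : ℕ) (ρ r R : ℝ) : ℝ :=
  exp (4 * π ^ 2 * p / log (R / r)) * (2 * R / ρ) ^ p

lemma one_le_growthFactor (hρ : 0 < ρ) (hρr : ρ ≤ r) (hrR : r < R) :
    1 ≤ growthFactor p ρ r R := by
  have hr : 0 < r := hρ.trans_le hρr
  have hlog : 0 < log (R / r) := log_pos ((one_lt_div hr).2 hrR)
  exact one_le_mul_of_one_le_of_one_le (one_le_exp (by positivity))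
    (one_le_pow₀ ((one_le_div hρ).2 (by linarith)))

lemma growthFactor_div {d : ℝ} (hd : d ≠ 0) (p : ℕ) (ρ r R : ℝ) :
    growthFactor p (ρ / d) (r / d) (R / d) = growthFactor p ρ r R := by
  simp only [growthFactor, mul_div_assoc', div_div_div_cancel_right₀ hd]

namespace PValentOn

lemma norm_le_exp_mul (hp : PValentOn g (ball 0 R) p) (hg : DifferentiableOn ℂ g (ball 0 R))
    (hr : 0 < r) (hrR : r < R) {a : ℝ} (ha : 0 < a)
    (hx : ∀ s ∈ Ioo r R, ∃ x ∈ sphere 0 s, ‖g x‖ ≤ a) {t : ℂ} (ht : t ∈ closedBall 0 r) :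
    ‖g t‖ ≤ exp (4 * π ^ 2 * p / log (R / r)) * a := by
  have hlog : 0 < log (R / r) := log_pos ((one_lt_div hr).2 hrR)
  rcases le_or_gt ‖g t‖ a with hta | hta
  · exact hta.trans (le_mul_of_one_le_left ha.le (one_le_exp (by positivity)))
  have hsub : norm ⁻¹' Ioo r R ⊆ ball (0 : ℂ) R := fun z hz => mem_ball_zero_iff.2 hz.2
  have hy : ∀ s ∈ Ioo r R, ∃ y ∈ sphere 0 s, ‖g t‖ ≤ ‖g y‖ := fun s hs =>
    exists_mem_sphere_norm_le_norm (hr.trans hs.1)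
      (hg.diffContOnCl_ball (closedBall_subset_ball hs.2)) (closedBall_subset_closedBall hs.1.le ht)
  have hle := (hp.mono hsub).log_div_mul_log_div_le (hg.mono hsub) hr hrR.le ha hta hx hy
  rwa [← div_le_iff₀ ha, ← log_le_iff_le_exp (div_pos (ha.trans hta) ha), le_div_iff₀' hlog]

lemma norm_le_growthFactor_mul_of_simple_zeros (hp : PValentOn g (ball 0 R) p)
    (hg : DifferentiableOn ℂ g (ball 0 R)) (hsimple : ∀ z ∈ ball 0 R, g z = 0 → deriv g z ≠ 0)
    (hρ : 0 < ρ) (hρr : ρ ≤ r) (hrR : r < R) (hm : ∀ t ∈ sphere 0 ρ, ‖g t‖ ≤ m) {t : ℂ}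
    (ht : t ∈ closedBall 0 r) : ‖g t‖ ≤ growthFactor p ρ r R * m := by
  obtain ⟨Z, hZp, hZ⟩ := hp.exists_finset 0
  obtain ⟨q, hq, hq0, hgq⟩ := exists_eq_prod_sub_mul_of_simple_zeros isOpen_ball hg hsimple hZ
  obtain ⟨u, hu, hprod⟩ := exists_mem_sphere_pow_card_le_norm_prod_sub Z id hρ
  have huR : u ∈ ball 0 R := sphere_subset_closedBall.trans
    (closedBall_subset_ball (hρr.trans_lt hrR)) hu
  have hR : 0 < R := by linarith
  have hx : ∀ s ∈ Ioo r R, ∃ x ∈ sphere 0 s, ‖g x‖ ≤ (2 * R) ^ Z.card * ‖q u‖ := by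
    intro s hs
    have hball : closedBall (0 : ℂ) s ⊆ ball 0 R := closedBall_subset_ball hs.2
    obtain ⟨x, hx, hxu⟩ := exists_mem_sphere_norm_le_norm_of_ne_zero
      (by linarith [hs.1]) (hq.diffContOnCl_ball hball) (fun z hz => hq0 z (hball hz))
      (sphere_subset_closedBall.trans (closedBall_subset_closedBall (hρr.trans hs.1.le)) hu)
    refine ⟨x, hx, ?_⟩
    rw [hgq, norm_mul]
    gcongr
    exact norm_prod_sub_le (fun z hz => ball_subset_closedBall ((hZ z).1 hz).1)
      (ball_subset_closedBall (hball (sphere_subset_closedBall hx)))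
  have hqu : ‖q u‖ ≤ m / ρ ^ Z.card := by
    rw [le_div_iff₀' (by positivity)]
    refine (mul_le_mul_of_nonneg_right hprod (norm_nonneg _)).trans ?_
    simpa only [id_eq, hgq u, norm_mul] using hm u hu
  have hm0 : 0 ≤ m := (norm_nonneg _).trans (hm u hu)
  calc ‖g t‖ ≤ exp (4 * π ^ 2 * p / log (R / r)) * ((2 * R) ^ Z.card * ‖q u‖) :=
        hp.norm_le_exp_mul hg (by linarith) hrR
          (mul_pos (by positivity) (norm_pos_iff.2 (hq0 u huR))) hx ht
    _ ≤ exp (4 * π ^ 2 * p / log (R / r)) * ((2 * R) ^ Z.card * (m / ρ ^ Z.card)) := by gcongr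
    _ = exp (4 * π ^ 2 * p / log (R / r)) * (2 * R / ρ) ^ Z.card * m := by
        rw [div_pow]
        ring
    _ ≤ growthFactor p ρ r R * m := by
        rw [growthFactor]
        gcongr
        exact (one_le_div hρ).2 (by linarith)

theorem norm_le_growthFactor_mul (hp : PValentOn g (ball 0 R) p)
    (hg : DifferentiableOn ℂ g (ball 0 R)) (hρ : 0 < ρ) (hρr : ρ ≤ r) (hrR : r < R)
    (hm : ∀ t ∈ sphere 0 ρ, ‖g t‖ ≤ m) {t : ℂ} (ht : t ∈ closedBall 0 r) :
    ‖g t‖ ≤ growthFactor p ρ r R * m := by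
  set C := growthFactor p ρ r R
  have hC : 1 ≤ C := one_le_growthFactor hρ hρr hrR
  refine le_of_forall_pos_le_add fun ε hε => ?_
  obtain ⟨w, hw, hwreg⟩ := exists_norm_lt_forall_deriv_ne_zero isOpen_ball hg
    (show 0 < ε / (C + 1) by positivity)
  have hgw : ‖g t - w‖ ≤ C * (m + ‖w‖) :=
    (hp.sub_const w).norm_le_growthFactor_mul_of_simple_zeros (hg.sub_const w)
      (fun z hz hzw => by simpa only [deriv_sub_const] using hwreg z hz (sub_eq_zero.1 hzw))
      hρ hρr hrR (fun t ht => (norm_sub_le _ _).trans (by gcongr; exact hm t ht)) ht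
  rw [lt_div_iff₀ (by positivity)] at hw
  calc ‖g t‖ ≤ ‖g t - w‖ + ‖w‖ := norm_le_norm_sub_add _ _
    _ ≤ C * (m + ‖w‖) + ‖w‖ := by gcongr
    _ ≤ C * m + ε := by linarith

end PValentOn

end Disc

section SeveralVariables

open Real

variable {n p : ℕ} {F : EuclideanSpace ℂ (Fin n) → ℂ} {W : Set (EuclideanSpace ℂ (Fin n))}
  {c z : EuclideanSpace ℂ (Fin n)} {ρ r R m : ℝ}

namespace SectionallyPValentOn

lemma mono {W' : Set (EuclideanSpace ℂ (Fin n))} (hF : SectionallyPValentOn F W p)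
    (hW : W' ⊆ W) : SectionallyPValentOn F W' p := fun a b hb w s hs =>
  hF a b hb w s fun t ht => ⟨hW (hs t ht).1, (hs t ht).2⟩

lemma pValentOn_line (hF : SectionallyPValentOn F W p) {a b : EuclideanSpace ℂ (Fin n)}
    (hb : b ≠ 0) : PValentOn (fun t : ℂ => F (a + t • b)) {t | a + t • b ∈ W} p := by
  intro w
  by_contra! hlt
  obtain ⟨s, hs, hcard⟩ := exists_subset_encard_eq (Order.add_one_le_of_lt hlt)
  have hfin : s.Finite := finite_of_encard_eq_coe (k := p + 1) (by exact_mod_cast hcard)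
  have hle := hF a b hb w hfin.toFinset fun t ht => hs (hfin.mem_toFinset.1 ht)
  rw [hfin.encard_eq_coe_toFinset_card] at hcard
  norm_cast at hcard
  omega

theorem norm_le_growthFactor_mul (hF : SectionallyPValentOn F (ball c R) p)
    (hdiff : DifferentiableOn ℂ F (ball c R)) (hρ : 0 < ρ) (hρr : ρ ≤ r) (hrR : r < R)
    (hm : ∀ x ∈ ball c ρ, ‖F x‖ ≤ m) (hz : z ∈ closedBall c r) :
    ‖F z‖ ≤ growthFactor p ρ r R * m := by
  have hm0 : 0 ≤ m := (norm_nonneg _).trans (hm c (mem_ball_self hρ))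
  rcases eq_or_ne z c with rfl | hzc
  · exact (hm z (mem_ball_self hρ)).trans
      (le_mul_of_one_le_left hm0 (one_le_growthFactor hρ hρr hrR))
  set d := ‖z - c‖
  have hd : 0 < d := norm_pos_iff.2 (sub_ne_zero.2 hzc)
  have hdist (t : ℂ) : dist (c + t • (z - c)) c = ‖t‖ * d := by
    rw [dist_eq_norm, add_sub_cancel_left, norm_smul]
  have hline : ball 0 (R / d) = {t : ℂ | c + t • (z - c) ∈ ball c R} := by
    ext t
    rw [mem_ball_zero_iff, mem_ofPred_eq, mem_ball, hdist, lt_div_iff₀ hd]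
  have hg : DifferentiableOn ℂ (fun t : ℂ => F (c + t • (z - c))) (ball 0 (R / d)) :=
    hdiff.comp (by fun_prop) hline.le
  have hm_closed : ∀ x ∈ closedBall c ρ, ‖F x‖ ≤ m := by
    rw [← closure_ball c hρ.ne']
    refine fun x hx => le_on_closure hm (hdiff.continuousOn.norm.mono ?_) continuousOn_const hx
    exact closure_ball c hρ.ne' ▸ closedBall_subset_ball (hρr.trans_lt hrR)
  have hm_sphere : ∀ t ∈ sphere (0 : ℂ) (ρ / d), ‖F (c + t • (z - c))‖ ≤ m := fun t ht =>
    hm_closed _ <| by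
      rw [mem_closedBall, hdist, mem_sphere_zero_iff_norm.1 ht, div_mul_cancel₀ _ hd.ne']
  have hone : (1 : ℂ) ∈ closedBall 0 (r / d) := by
    rw [mem_closedBall_zero_iff, norm_one, one_le_div hd]
    exact mem_closedBall_iff_norm.1 hz
  have hgrowth := (hline ▸ hF.pValentOn_line (sub_ne_zero.2 hzc)).norm_le_growthFactor_mul hg
    (div_pos hρ hd) (div_le_div_of_nonneg_right hρr hd.le) (div_lt_div_of_pos_right hrR hd)
    hm_sphere hone
  rwa [growthFactor_div hd.ne', one_smul, add_sub_cancel] at hgrowth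

end SectionallyPValentOn

end SeveralVariables

section Charts

open Real

/-- The constant `c_p`: the growth factor for the radii `ρ`, `2`, `3` is `c_p / ρ ^ p`. A chart
`B₁` lies in the ball of radius `2` around any of its points, and `B₄` contains the ball of
radius `3`. -/
def doublingConstant (p : ℕ) : ℝ :=
  exp (4 * π ^ 2 * p / log (3 / 2)) * 6 ^ p

lemma growthFactor_two_three (p : ℕ) (ρ : ℝ) :
    growthFactor p ρ 2 3 = doublingConstant p / ρ ^ p := by
  rw [growthFactor, doublingConstant, div_pow, ← mul_div_assoc]
  norm_num

lemma one_le_doublingConstant_div_pow (p : ℕ) {ρ : ℝ} (hρ : 0 < ρ) (hρ1 : ρ ≤ 1) :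
    1 ≤ doublingConstant p / ρ ^ p :=
  growthFactor_two_three p ρ ▸ one_le_growthFactor hρ (hρ1.trans one_le_two) (by norm_num)

lemma one_le_doublingConstant (p : ℕ) : 1 ≤ doublingConstant p := by
  simpa using one_le_doublingConstant_div_pow p one_pos le_rfl

namespace DoublingCovering

variable {n N p : ℕ} {G Y Ω S : Set (EuclideanSpace ℂ (Fin N))} {U : DoublingCovering n N G Y}
  {f : EuclideanSpace ℂ (Fin N) → ℂ} {ρ m : ℝ}

lemma norm_le_of_radGe {j : Fin U.kappa} (hdiff : DifferentiableOn ℂ (f ∘ U.psi j) (ball 0 4))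
    (hval : SectionallyPValentOn (f ∘ U.psi j) (ball 0 4) p) (hρ : 0 < ρ) (hρ1 : ρ ≤ 1)
    (hS : U.RadGe j S ρ) (hm : ∀ x ∈ S, ‖f x‖ ≤ m) :
    ∀ x ∈ U.chart j, ‖f x‖ ≤ doublingConstant p / ρ ^ p * m := by
  obtain ⟨c, hc⟩ := hS
  rintro _ ⟨y, hy, rfl⟩
  have hc1 : c ∈ ball 0 1 := (hc (mem_ball_self hρ)).1
  have hball : ball c 3 ⊆ ball 0 4 :=
    ball_subset_ball' (by linarith [mem_ball.1 hc1])
  have hyc : y ∈ closedBall c 2 :=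
    mem_closedBall.2 (by linarith [dist_triangle_right y c 0, mem_ball.1 hc1, mem_ball.1 hy])
  rw [← growthFactor_two_three]
  exact (hval.mono hball).norm_le_growthFactor_mul (hdiff.mono hball) hρ
    (hρ1.trans one_le_two) (by norm_num) (fun x hx => hm _ (hc hx).2.2) hyc

lemma norm_le_of_chainFrom (hdiff : ∀ j, DifferentiableOn ℂ (f ∘ U.psi j) (ball 0 4))
    (hval : ∀ j, SectionallyPValentOn (f ∘ U.psi j) (ball 0 4) p) (hρ : 0 < ρ) (hρ1 : ρ ≤ 1)
    (hm : ∀ x ∈ Ω, ‖f x‖ ≤ m) {L : ℕ} {z : EuclideanSpace ℂ (Fin N)}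
    (hz : U.ChainFrom Ω ρ L z) : ‖f z‖ ≤ (doublingConstant p / ρ ^ p) ^ L * m := by
  obtain ⟨l, hl, js, hlL, -, hfirst, hinter, hlast⟩ := hz
  set K := doublingConstant p / ρ ^ p
  have hK : 1 ≤ K := one_le_doublingConstant_div_pow p hρ hρ1
  have hm0 : 0 ≤ m :=
    let ⟨c, hc⟩ := hfirst
    (norm_nonneg _).trans (hm _ (hc (mem_ball_self hρ)).2.2)
  have hchain (i : ℕ) (hi : i < l) : ∀ x ∈ U.chart (js ⟨i, hi⟩), ‖f x‖ ≤ K ^ (i + 1) * m := by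
    induction i with
    | zero => simpa using norm_le_of_radGe (hdiff _) (hval _) hρ hρ1 hfirst hm
    | succ i ih =>
      rw [pow_succ', mul_assoc]
      exact norm_le_of_radGe (hdiff _) (hval _) hρ hρ1 (hinter i hi).2 (ih (by omega))
  calc ‖f z‖ ≤ K ^ (l - 1 + 1) * m := hchain (l - 1) (by omega) z hlast
    _ ≤ K ^ L * m := by gcongr; omega

lemma bddAbove_norm_image (U : DoublingCovering n N G Y)
    (hcont : ∀ j, ContinuousOn (f ∘ U.psi j) (closedBall 0 1)) :
    BddAbove ((fun v => ‖f v‖) '' G) := by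
  have hchart (j : Fin U.kappa) : BddAbove ((fun v => ‖f v‖) '' U.chart j) := by
    refine ((isCompact_closedBall 0 1).bddAbove_image (hcont j).norm).mono ?_
    rw [chart, image_image]
    exact image_mono ball_subset_closedBall
  have hG : (fun v => ‖f v‖) '' G ⊆ ⋃ j ∈ univ, (fun v => ‖f v‖) '' U.chart j := by
    rw [biUnion_univ, ← image_iUnion]
    exact image_mono U.covers
  exact ((finite_univ.bddAbove_biUnion).2 fun j _ => hchart j).mono hG

end DoublingCovering

end Charts

theorem chart_number_lower_bound_general {p n N : ℕ} {G Y Ω : Set (EuclideanSpace ℂ (Fin N))}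
    (U : DoublingCovering n N G Y) {f : EuclideanSpace ℂ (Fin N) → ℂ}
    (hdiff : ∀ j, DifferentiableOn ℂ (f ∘ U.psi j) (ball 0 4))
    (hval : ∀ j, SectionallyPValentOn (f ∘ U.psi j) (ball 0 4) p) (hΩG : Ω ⊆ G)
    {ρ : ℝ} (hρ : 0 < ρ) (hρ1 : ρ ≤ 1) {L : ℕ} (hchain : ∀ z ∈ G, U.ChainFrom Ω ρ L z)
    (hK : 1 < doublingConstant p / ρ ^ p) (hΩ : 0 < sSup ((fun v => ‖f v‖) '' Ω)) :
    Real.log (sSup ((fun v => ‖f v‖) '' G) / sSup ((fun v => ‖f v‖) '' Ω)) /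
      Real.log (doublingConstant p / ρ ^ p) ≤ L := by
  have hbdd : BddAbove ((fun v => ‖f v‖) '' G) := U.bddAbove_norm_image fun j =>
    (hdiff j).continuousOn.mono (closedBall_subset_ball (by norm_num))
  have hbddΩ : BddAbove ((fun v => ‖f v‖) '' Ω) := hbdd.mono (image_mono hΩG)
  have hΩ_ne : ((fun v => ‖f v‖) '' Ω).Nonempty :=
    nonempty_iff_ne_empty.2 fun h => by simp [h] at hΩ
  have hG : 0 < sSup ((fun v => ‖f v‖) '' G) :=
    hΩ.trans_le (csSup_le_csSup hbdd hΩ_ne (image_mono hΩG))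
  have hgrowth : sSup ((fun v => ‖f v‖) '' G) ≤
      (doublingConstant p / ρ ^ p) ^ L * sSup ((fun v => ‖f v‖) '' Ω) := by
    refine csSup_le (hΩ_ne.mono (image_mono hΩG)) (forall_mem_image.2 fun z hz => ?_)
    exact DoublingCovering.norm_le_of_chainFrom hdiff hval hρ hρ1
      (fun x hx => le_csSup hbddΩ (mem_image_of_mem _ hx)) (hchain z hz)
  rw [div_le_iff₀ (Real.log_pos hK), ← Real.log_pow]
  exact Real.log_le_log (div_pos hG hΩ) ((div_le_iff₀ hΩ).2 hgrowth)

/-- Lower bound on the number of charts of a doubling covering in terms of a doubling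
constant: for every `p ≥ 1` there is `c_p ≥ 1` (the constant from the non-concentric
doubling inequality) such that if `f` is analytic and sectionally `p`-valent in all charts
of a doubling covering `𝒰` of `G`, `Ω ⊆ G` is compact, `0 < ρ ≤ 1`, every point of `G` is
reached from `Ω` by a chain of at most `ℓ(𝒰) ≤ κ(𝒰)` charts with all relevant radii at
least `ρ`, `c_p/ρ^p > 1` and `sup_Ω |f| > 0`, then
`κ(𝒰) ≥ log(sup_G |f| / sup_Ω |f|) / log(c_p/ρ^p)`. -/
theorem chart_number_lower_bound (p : ℕ) (hp : 1 ≤ p) :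
    ∃ c : ℝ, 1 ≤ c ∧
      ∀ (n N : ℕ) (G Y : Set (EuclideanSpace ℂ (Fin N)))
        (U : DoublingCovering n N G Y), IsCompact G →
      ∀ f : EuclideanSpace ℂ (Fin N) → ℂ,
        (∀ j, AnalyticOnNhd ℂ (f ∘ U.psi j) (ball (0 : EuclideanSpace ℂ (Fin n)) 4)) →
        (∀ j, SectionallyPValentOn (f ∘ U.psi j) (ball (0 : EuclideanSpace ℂ (Fin n)) 4) p) →
      ∀ Ω : Set (EuclideanSpace ℂ (Fin N)), IsCompact Ω → Ω ⊆ G →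
      ∀ ρ : ℝ, 0 < ρ → ρ ≤ 1 →
      ∀ L : ℕ, 1 ≤ L → L ≤ U.kappa →
        (∀ z ∈ G, U.ChainFrom Ω ρ L z) →
        1 < c / ρ ^ p →
        0 < sSup ((fun v => ‖f v‖) '' Ω) →
        Real.log (sSup ((fun v => ‖f v‖) '' G) / sSup ((fun v => ‖f v‖) '' Ω)) /
            Real.log (c / ρ ^ p) ≤ (U.kappa : ℝ) :=
  ⟨doublingConstant p, one_le_doublingConstant p,
    fun _ _ _ _ U _ _ hf hval _ _ hΩG _ hρ hρ1 _ _ hLκ hchain hK hΩ =>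
      (chart_number_lower_bound_general U (fun j => (hf j).differentiableOn) hval hΩG hρ hρ1
        hchain hK hΩ).trans (Nat.cast_le.2 hLκ)⟩
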